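/- arXiv:2406.03270 — 8 statements merged into one kernel-verified Lean document; each statement's English description precedes it below -/
import Mathlib

section
/- For λ ∈ K, one has φ^c(λ) = 0 if and only if λ ∈ SOL(K, F), i.e., if and only if ⟨F(λ), ω − λ⟩ ≥ 0 for all ω ∈ K. -/
open Matrix

/-!
Taking `ω = l` shows `φ l ≥ 0`. If `l` solves the variational inequality, every value of the
maximand is nonpositive, so `φ l = 0`. Conversely, if `F l ⬝ᵥ (ω - l) < 0` for some `ω ∈ K`, then at
the point `l + t • (ω - l)` of `K`, for small `t > 0`, the linear term of the maximand (of order `t`)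
dominates the quadratic one (of order `t ^ 2`), so `φ l > 0`.
-/

/-- For λ ∈ K, φ^c(λ) = 0 iff λ ∈ SOL(K, F), i.e., iff ⟨F(λ), ω − λ⟩ ≥ 0 for all ω ∈ K. -/
theorem stmt_4 (n : ℕ) (hn : 1 ≤ n) (K : Set (Fin n → ℝ))
    (hKne : K.Nonempty) (hKcl : IsClosed K) (hKcv : Convex ℝ K)
    (F : (Fin n → ℝ) → (Fin n → ℝ)) (hF : Continuous F)
    (c : ℝ) (hc : 0 < c) (A : Matrix (Fin n) (Fin n) ℝ) (hA : A.PosDef)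
    (φ : (Fin n → ℝ) → ℝ)
    (hφ : ∀ l, IsGreatest
      ((fun ω => F l ⬝ᵥ (l - ω) - c / 2 * ((l - ω) ⬝ᵥ A.mulVec (l - ω))) '' K) (φ l)) :
    ∀ l ∈ K, (φ l = 0 ↔ ∀ ω ∈ K, 0 ≤ F l ⬝ᵥ (ω - l)) := by
  intro l hl
  obtain ⟨⟨ω₀, hω₀, hmax⟩, hub⟩ := hφ l
  have hquad : ∀ v : Fin n → ℝ, 0 ≤ v ⬝ᵥ A.mulVec v := fun v => by
    simpa using hA.posSemidef.dotProduct_mulVec_nonneg v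
  have hflip : ∀ ω, F l ⬝ᵥ (l - ω) = -(F l ⬝ᵥ (ω - l)) := fun ω => by
    rw [← dotProduct_neg, neg_sub]
  constructor
  · intro h0 ω hω
    by_contra! hneg
    have hq := hquad (l - ω)
    set a := F l ⬝ᵥ (ω - l) with ha
    set q := (l - ω) ⬝ᵥ A.mulVec (l - ω) with hqdef
    have hcq : 0 ≤ c * q := by positivity
    have hd : 0 < c * q - a := by linarith
    -- This step length is at most 1 and makes the linear gain `-t * a` exceed the
    -- quadratic penalty `c / 2 * t ^ 2 * q`.
    obtain ⟨t, ht⟩ : ∃ t, t = -a / (c * q - a) := ⟨_, rfl⟩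
    have ht0 : 0 < t := by rw [ht]; exact div_pos (by linarith) hd
    have ht1 : t ≤ 1 := by rw [ht, div_le_one hd]; linarith
    have htd : t * (c * q - a) = -a := by rw [ht]; field_simp
    have hmem : l + t • (ω - l) ∈ K := hKcv.add_smul_sub_mem hl hω ⟨ht0.le, ht1⟩
    have hle := hub ⟨_, hmem, rfl⟩
    have hv : l - (l + t • (ω - l)) = t • (l - ω) := by
      rw [← neg_sub l ω, smul_neg]; abel
    simp only [hv, mulVec_smul, dotProduct_smul, smul_dotProduct, smul_eq_mul, hflip,
      ← ha, ← hqdef, h0] at hle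
    have hle' : t * (-a - c / 2 * (t * q)) ≤ 0 := by linarith
    have hpos : 0 < -a - c / 2 * (t * q) := by nlinarith
    linarith [mul_pos ht0 hpos]
  · intro h
    apply le_antisymm
    · rw [← hmax]
      have h1 := h ω₀ hω₀
      have h2 := mul_nonneg (half_pos hc).le (hquad (l - ω₀))
      simp only [hflip]
      linarith
    · have := hub ⟨l, hl, rfl⟩
      simpa using this
end

section
/- If SOL(K, F) is nonempty, then SOL(K, F) coincides with the set of global minimizers of φ^c over K, and the optimal value of the problem min_{λ ∈ K} φ^c(λ) is zero: that is, λ ∈ SOL(K, F) if and only if λ ∈ K, φ^c(λ) = 0, and φ^c(λ) ≤ φ^c(μ) for all μ ∈ K. -/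
/-!
For `l ∈ K` the choice `ω = l` gives `φ l ≥ 0`. If `l` solves the variational inequality, every
value under the maximum is `≤ 0`, so `φ l = 0`, and `l` is a minimizer. Conversely, if `φ l = 0`,
testing the maximum along the segment `l + t (ω - l)` gives `0 ≤ a + (c / 2) t q` for `t ∈ (0, 1]`,
where `a = ⟨F l, ω - l⟩` and `q = ⟨ω - l, A (ω - l)⟩`; small `t` forces `a ≥ 0`.
-/

/-- First-order argument along a segment: a quadratic `t a + (c / 2) t² q` that is nonnegative
on `(0, 1]` has nonnegative slope at `0`. -/
lemma slope_nonneg_of_quadratic_nonneg {a c q : ℝ} (hc : 0 < c) (hq : 0 ≤ q)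
    (h : ∀ t : ℝ, 0 < t → t ≤ 1 → 0 ≤ t * a + c / 2 * (t ^ 2 * q)) : 0 ≤ a := by
  by_contra! ha
  have hcq : 0 ≤ c * q := by positivity
  have hd : 0 < -a + c * q := by linarith
  -- This `t` satisfies `t c q ≤ -a`, hence `a + (c / 2) t q ≤ a / 2 < 0`.
  obtain ⟨t, ht⟩ : ∃ t, t = -a / (-a + c * q) := ⟨_, rfl⟩
  have ht0 : 0 < t := ht ▸ div_pos (by linarith) hd
  have ht1 : t ≤ 1 := by rw [ht, div_le_one hd]; linarith
  have hteq : t * (-a + c * q) = -a := by rw [ht]; field_simp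
  have h1 : 0 ≤ t * (a + c / 2 * (t * q)) := by
    have := h t ht0 ht1
    nlinarith
  have h2 := nonneg_of_mul_nonneg_right h1 ht0
  have h3 : t * a < 0 := mul_neg_of_pos_of_neg ht0 ha
  nlinarith

open Matrix

/-- If SOL(K, F) is nonempty, then SOL(K, F) coincides with the set of global minimizers
of φ^c over K and the optimal value of min_{λ ∈ K} φ^c(λ) is zero. -/
theorem stmt_5 (n : ℕ) (hn : 1 ≤ n) (K : Set (Fin n → ℝ))
    (hKne : K.Nonempty) (hKcl : IsClosed K) (hKcv : Convex ℝ K)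
    (F : (Fin n → ℝ) → (Fin n → ℝ)) (hF : Continuous F)
    (c : ℝ) (hc : 0 < c) (A : Matrix (Fin n) (Fin n) ℝ) (hA : A.PosDef)
    (φ : (Fin n → ℝ) → ℝ)
    (hφ : ∀ l, IsGreatest
      ((fun ω => F l ⬝ᵥ (l - ω) - c / 2 * ((l - ω) ⬝ᵥ A.mulVec (l - ω))) '' K) (φ l))
    (hSOL : ∃ l ∈ K, ∀ ω ∈ K, 0 ≤ F l ⬝ᵥ (ω - l)) :
    ∀ l, ((l ∈ K ∧ ∀ ω ∈ K, 0 ≤ F l ⬝ᵥ (ω - l)) ↔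
      (l ∈ K ∧ φ l = 0 ∧ ∀ μ ∈ K, φ l ≤ φ μ)) := by
  have hq : ∀ x : Fin n → ℝ, 0 ≤ x ⬝ᵥ A.mulVec x := fun x => by
    simpa using hA.posSemidef.dotProduct_mulVec_nonneg x
  have hnn : ∀ m ∈ K, 0 ≤ φ m := fun m hm => (hφ m).2 ⟨m, hm, by simp⟩
  intro l
  constructor
  · rintro ⟨hl, hsol⟩
    have h0 : φ l = 0 := by
      refine le_antisymm ?_ (hnn l hl)
      obtain ⟨ω, hω, he⟩ := (hφ l).1
      rw [← he]
      have h1 := hsol ω hω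
      have h2 : 0 ≤ c / 2 * ((l - ω) ⬝ᵥ A.mulVec (l - ω)) := mul_nonneg (by positivity) (hq _)
      have h3 : F l ⬝ᵥ (l - ω) = -(F l ⬝ᵥ (ω - l)) := by rw [← dotProduct_neg, neg_sub]
      simp only [h3]
      linarith
    exact ⟨hl, h0, fun m hm => h0 ▸ hnn m hm⟩
  · rintro ⟨hl, h0, -⟩
    refine ⟨hl, fun ω hω => slope_nonneg_of_quadratic_nonneg hc (hq (ω - l)) fun t ht0 ht1 => ?_⟩
    have h1 := (hφ l).2 ⟨_, hKcv.add_smul_sub_mem hl hω ⟨ht0.le, ht1⟩, rfl⟩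
    have h2 : l - (l + t • (ω - l)) = -(t • (ω - l)) := by abel
    simp only [h2, h0, dotProduct_neg, neg_dotProduct, mulVec_neg, mulVec_smul, dotProduct_smul,
      smul_dotProduct, smul_eq_mul, neg_neg] at h1
    linarith
end

section
/- If F is continuously differentiable, then the regularized gap function φ^c is differentiable at every λ ∈ ℝ^n, with gradient ∇φ^c(λ) = F(λ) + (DF(λ)ᵀ − cA)(λ − ω̂(λ)), where DF(λ) is the Jacobian matrix of F at λ and ω̂(λ) ∈ K is the unique maximizer over ω ∈ K of ⟨F(λ), λ − ω⟩ − (c/2)⟨λ − ω, A(λ − ω)⟩. -/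
open RealInnerProductSpace

/-!
The proof is a form of Danskin's theorem. Write `f(l, ω)` for the objective. Since `A` is positive
definite, `f(l, ·)` is strongly concave, so the maximizer beats any `ω ∈ K` by a multiple of
`‖ω - ωhat l‖²` (`gapObj_add_le`). The mixed differences of `f` have the closed form
`gapObj_mixed`; combined with strong concavity this gives continuity of `ωhat`
(`norm_sub_maximizer_le`).

With `a = ωhat l` and `b = ωhat l'`, maximality gives
`f(l', a) - f(l, a) ≤ φ l' - φ l ≤ f(l', b) - f(l, b)`, and the two bounds differ by a mixed
difference, which is `O(‖l' - l‖) * ‖b - a‖ = o(‖l' - l‖)`. Hence `φ` has at `l` the same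
derivative as the smooth function `f(·, a)`.
-/

section GapFunction

variable {E : Type*} [NormedAddCommGroup E] [InnerProductSpace ℝ E]

/-- The objective `⟪F l, l - ω⟫ - (c/2) ⟪l - ω, T (l - ω)⟫` of the regularized gap function,
with a continuous linear operator `T` in the role of the matrix. -/
noncomputable def gapObj (F : E → E) (c : ℝ) (T : E →L[ℝ] E) (l ω : E) : ℝ :=
  ⟪F l, l - ω⟫ - c / 2 * ⟪l - ω, T (l - ω)⟫

lemma gapObj_mixed (F : E → E) (c : ℝ) (T : E →L[ℝ] E) (hT : ∀ x y, ⟪T x, y⟫ = ⟪x, T y⟫)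
    (l l' a b : E) :
    (gapObj F c T l' b - gapObj F c T l b) - (gapObj F c T l' a - gapObj F c T l a)
      = ⟪F l' - F l, a - b⟫ + c * ⟪l' - l, T (b - a)⟫ := by
  have h : ∀ x y, ⟪x, T y⟫ = ⟪y, T x⟫ := fun x y => by rw [← hT, real_inner_comm]
  simp only [gapObj, map_sub, inner_sub_left, inner_sub_right]
  rw [h a l, h b l, h a l', h b l']
  ring

/-- Quadratic growth at the maximizer, obtained by testing maximality at the midpoint of `a`
and `ω`. -/
lemma gapObj_add_le {K : Set E} (hK : Convex ℝ K) (F : E → E) (c : ℝ) (T : E →L[ℝ] E)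
    (l a ω : E) (ha : a ∈ K) (hω : ω ∈ K)
    (hmax : ∀ w ∈ K, gapObj F c T l w ≤ gapObj F c T l a) :
    gapObj F c T l ω + c / 4 * ⟪ω - a, T (ω - a)⟫ ≤ gapObj F c T l a := by
  have hm := hmax _ (hK ha hω (a := 1 / 2) (b := 1 / 2) (by norm_num) (by norm_num) (by norm_num))
  have key : gapObj F c T l ((1 / 2 : ℝ) • a + (1 / 2 : ℝ) • ω)
      = (gapObj F c T l a + gapObj F c T l ω) / 2 + c / 8 * ⟪ω - a, T (ω - a)⟫ := by
    simp only [gapObj, map_sub, map_add, map_smul, inner_sub_left, inner_sub_right,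
      inner_add_left, inner_add_right, real_inner_smul_left, real_inner_smul_right]
    ring
  linarith

lemma norm_sub_maximizer_le {K : Set E} (hK : Convex ℝ K) (F : E → E) {c m : ℝ} (hc : 0 < c)
    (hm : 0 < m) (T : E →L[ℝ] E) (hT : ∀ x y, ⟪T x, y⟫ = ⟪x, T y⟫)
    (hcoer : ∀ x, m * ‖x‖ ^ 2 ≤ ⟪x, T x⟫) (s : E → E) (hsK : ∀ l, s l ∈ K)
    (hs : ∀ l, ∀ w ∈ K, gapObj F c T l w ≤ gapObj F c T l (s l)) (l l' : E) :
    ‖s l' - s l‖ ≤ 2 / (c * m) * (‖F l' - F l‖ + c * (‖l' - l‖ * ‖T‖)) := by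
  have h1 := gapObj_add_le hK F c T l (s l) (s l') (hsK l) (hsK l') (hs l)
  have h2 := gapObj_add_le hK F c T l' (s l') (s l) (hsK l') (hsK l) (hs l')
  have h3 := gapObj_mixed F c T hT l l' (s l) (s l')
  have h4 := mul_le_mul_of_nonneg_left (hcoer (s l' - s l)) hc.le
  have h5 := mul_le_mul_of_nonneg_left (hcoer (s l - s l')) hc.le
  have h6 : ⟪F l' - F l, s l - s l'⟫ ≤ ‖F l' - F l‖ * ‖s l' - s l‖ := by
    rw [norm_sub_rev (s l')]; exact real_inner_le_norm _ _
  have h7 : ⟪l' - l, T (s l' - s l)⟫ ≤ ‖l' - l‖ * (‖T‖ * ‖s l' - s l‖) :=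
    (real_inner_le_norm _ _).trans (by gcongr; exact T.le_opNorm _)
  have h8 := mul_le_mul_of_nonneg_left h7 hc.le
  rw [norm_sub_rev (s l)] at h5
  have h9 : c * m / 2 * ‖s l' - s l‖ * ‖s l' - s l‖
      ≤ (‖F l' - F l‖ + c * (‖l' - l‖ * ‖T‖)) * ‖s l' - s l‖ := by linarith
  have h10 : c * m / 2 * ‖s l' - s l‖ ≤ ‖F l' - F l‖ + c * (‖l' - l‖ * ‖T‖) := by
    rcases (norm_nonneg (s l' - s l)).eq_or_lt with h0 | h0
    · rw [← h0]; simp; positivity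
    · exact le_of_mul_le_mul_right h9 h0
  rw [div_mul_eq_mul_div, le_div_iff₀ (by positivity)]
  linarith

lemma hasGradientAt_gapObj [CompleteSpace E] (F : E → E) (c : ℝ) (T : E →L[ℝ] E)
    (hT : ∀ x y, ⟪T x, y⟫ = ⟪x, T y⟫) (l a : E) (hF : DifferentiableAt ℝ F l) :
    HasGradientAt (fun x => gapObj F c T x a)
      (F l + ContinuousLinearMap.adjoint (fderiv ℝ F l) (l - a) - c • T (l - a)) l := by
  rw [hasGradientAt_iff_hasFDerivAt]
  have hid : HasFDerivAt (fun x : E => x - a) (ContinuousLinearMap.id ℝ E) l :=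
    (hasFDerivAt_id l).sub_const a
  have h := (hF.hasFDerivAt.inner ℝ hid).sub
    ((hid.inner ℝ (T.hasFDerivAt.comp l hid)).const_mul (c / 2))
  refine h.congr_fderiv ?_
  ext v
  have e1 : ⟪l - a, T v⟫ = ⟪T (l - a), v⟫ := (hT _ _).symm
  have e2 : ⟪v, T (l - a)⟫ = ⟪T (l - a), v⟫ := real_inner_comm _ _
  have e3 : ⟪fderiv ℝ F l v, l - a⟫ = ⟪l - a, fderiv ℝ F l v⟫ := real_inner_comm _ _
  simp [inner_sub_left (F l + _), inner_add_left, real_inner_smul_left,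
    ContinuousLinearMap.adjoint_inner_left, -map_sub] 
  rw [e1, e2, e3]
  ring

open Asymptotics Filter Topology in
theorem hasGradientAt_gap [CompleteSpace E] {K : Set E} (hK : Convex ℝ K) (F : E → E)
    (hF : Differentiable ℝ F) {c m : ℝ} (hc : 0 < c)
    (hm : 0 < m) (T : E →L[ℝ] E) (hT : ∀ x y, ⟪T x, y⟫ = ⟪x, T y⟫)
    (hcoer : ∀ x, m * ‖x‖ ^ 2 ≤ ⟪x, T x⟫) (s : E → E) (hsK : ∀ l, s l ∈ K)
    (hs : ∀ l, ∀ w ∈ K, gapObj F c T l w ≤ gapObj F c T l (s l)) (l : E) :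
    HasGradientAt (fun x => gapObj F c T x (s x))
      (F l + ContinuousLinearMap.adjoint (fderiv ℝ F l) (l - s l) - c • T (l - s l)) l := by
  have hg := hasGradientAt_gapObj F c T hT l (s l) (hF l)
  rw [hasGradientAt_iff_hasFDerivAt] at hg ⊢
  have hscont : Tendsto (fun x => s x - s l) (𝓝 l) (𝓝 0) := by
    refine squeeze_zero_norm
      (fun x => norm_sub_maximizer_le hK F hc hm T hT hcoer s hsK hs l x) ?_
    have hFc := hF.continuous
    have : Continuous fun x => 2 / (c * m) * (‖F x - F l‖ + c * (‖x - l‖ * ‖T‖)) := by fun_prop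
    simpa using this.tendsto l
  have hs1 : (fun x => s x - s l) =o[𝓝 l] (fun _ => (1 : ℝ)) :=
    (isLittleO_one_iff ℝ).2 hscont
  have hFO : (fun x => F x - F l) =O[𝓝 l] (fun x => x - l) := (hF l).isBigO_sub
  have hrem : (fun x => ‖F x - F l‖ * ‖s x - s l‖ + c * (‖x - l‖ * (‖T‖ * ‖s x - s l‖)))
      =o[𝓝 l] (fun x => x - l) := by
    have h1 : (fun x => ‖F x - F l‖ * ‖s x - s l‖) =o[𝓝 l] (fun x => ‖x - l‖ * (1 : ℝ)) :=
      hFO.norm_norm.mul_isLittleO hs1.norm_left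
    have h2 : (fun x => ‖x - l‖ * (‖T‖ * ‖s x - s l‖)) =o[𝓝 l] (fun x => ‖x - l‖ * (1 : ℝ)) :=
      (isBigO_refl _ _).mul_isLittleO (hs1.norm_left.const_mul_left _)
    have h3 := h1.add (h2.const_mul_left c)
    simp only [mul_one] at h3
    exact h3.of_norm_right
  -- `φ` differs from the smooth function `f(·, s l)` by at most the mixed-difference remainder.
  have hdiff : (fun x => gapObj F c T x (s x) - gapObj F c T x (s l))
      =o[𝓝 l] (fun x => x - l) := by
    refine IsBigO.trans_isLittleO (IsBigO.of_bound 1 (Eventually.of_forall fun x => ?_)) hrem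
    have h0 := hs x (s l) (hsK l)
    have h1 := hs l (s x) (hsK x)
    have h2 := gapObj_mixed F c T hT l x (s l) (s x)
    have h6 : ⟪F x - F l, s l - s x⟫ ≤ ‖F x - F l‖ * ‖s x - s l‖ := by
      rw [norm_sub_rev (s x)]; exact real_inner_le_norm _ _
    have h7 : ⟪x - l, T (s x - s l)⟫ ≤ ‖x - l‖ * (‖T‖ * ‖s x - s l‖) :=
      (real_inner_le_norm _ _).trans (by gcongr; exact T.le_opNorm _)
    have h8 := mul_le_mul_of_nonneg_left h7 hc.le
    rw [one_mul, Real.norm_of_nonneg (by linarith), Real.norm_of_nonneg (by positivity)]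
    linarith
  rw [hasFDerivAt_iff_isLittleO] at hg ⊢
  refine (hg.add hdiff).congr_left fun x => ?_
  ring

end GapFunction

/-- Compactness of the unit sphere turns positivity into coercivity. -/
lemma exists_coercive {E : Type*} [NormedAddCommGroup E] [InnerProductSpace ℝ E]
    [FiniteDimensional ℝ E] (T : E →L[ℝ] E) (hpos : ∀ x, x ≠ 0 → 0 < ⟪x, T x⟫) :
    ∃ m : ℝ, 0 < m ∧ ∀ x, m * ‖x‖ ^ 2 ≤ ⟪x, T x⟫ := by
  have hcont : Continuous fun x : E => ⟪x, T x⟫ := by fun_prop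
  obtain ⟨m, hm, hmle⟩ : ∃ m : ℝ, 0 < m ∧ ∀ x ∈ Metric.sphere (0 : E) 1, m ≤ ⟪x, T x⟫ := by
    refine (isCompact_sphere (0 : E) 1).exists_forall_le' hcont.continuousOn fun x hx => hpos x ?_
    rintro rfl
    simp at hx
  refine ⟨m, hm, fun x => ?_⟩
  rcases eq_or_ne x 0 with rfl | hx
  · simp
  have hx' : 0 < ‖x‖ := norm_pos_iff.2 hx
  have h := hmle (‖x‖⁻¹ • x) (by simp [norm_smul, hx'.ne'])
  rw [map_smul, real_inner_smul_left, real_inner_smul_right] at h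
  calc m * ‖x‖ ^ 2 ≤ (‖x‖⁻¹ * (‖x‖⁻¹ * ⟪x, T x⟫)) * ‖x‖ ^ 2 := by gcongr
    _ = ⟪x, T x⟫ := by field_simp

/-- If F is continuously differentiable, then the regularized gap function φ^c is
differentiable at every λ, with gradient ∇φ^c(λ) = F(λ) + (DF(λ)ᵀ − cA)(λ − ω̂(λ)),
where ω̂(λ) ∈ K is the unique maximizer defining φ^c(λ). -/
theorem stmt_6 (n : ℕ) (hn : 1 ≤ n) (K : Set (EuclideanSpace ℝ (Fin n)))
    (hKne : K.Nonempty) (hKcl : IsClosed K) (hKcv : Convex ℝ K)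
    (F : EuclideanSpace ℝ (Fin n) → EuclideanSpace ℝ (Fin n)) (hF : ContDiff ℝ 1 F)
    (c : ℝ) (hc : 0 < c) (A : Matrix (Fin n) (Fin n) ℝ) (hA : A.PosDef)
    (φ : EuclideanSpace ℝ (Fin n) → ℝ)
    (ωhat : EuclideanSpace ℝ (Fin n) → EuclideanSpace ℝ (Fin n))
    (hωhatK : ∀ l, ωhat l ∈ K)
    (hωhatmax : ∀ l, ∀ ω ∈ K,
      ⟪F l, l - ω⟫ - c / 2 * ⟪l - ω, Matrix.toEuclideanLin A (l - ω)⟫ ≤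
        ⟪F l, l - ωhat l⟫ -
          c / 2 * ⟪l - ωhat l, Matrix.toEuclideanLin A (l - ωhat l)⟫)
    (hφ : ∀ l, IsGreatest
      ((fun ω => ⟪F l, l - ω⟫ - c / 2 * ⟪l - ω, Matrix.toEuclideanLin A (l - ω)⟫) '' K)
      (φ l)) :
    ∀ l, HasGradientAt φ
      (F l + ContinuousLinearMap.adjoint (fderiv ℝ F l) (l - ωhat l)
        - c • Matrix.toEuclideanLin A (l - ωhat l)) l := by
  intro l
  let T : EuclideanSpace ℝ (Fin n) →L[ℝ] EuclideanSpace ℝ (Fin n) :=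
    LinearMap.toContinuousLinearMap (Matrix.toEuclideanLin A)
  have hT : ∀ x y, ⟪T x, y⟫ = ⟪x, T y⟫ := Matrix.isSymmetric_toEuclideanLin_iff.2 hA.isHermitian
  have hpos : ∀ x, x ≠ 0 → 0 < ⟪x, T x⟫ := by
    intro x hx
    have h := hA.dotProduct_mulVec_pos (x := x.ofLp) (by simpa using hx)
    have e : ⟪x, T x⟫ = star x.ofLp ⬝ᵥ A.mulVec x.ofLp := by
      rw [EuclideanSpace.inner_eq_star_dotProduct, dotProduct_comm]
      rfl
    rwa [e]
  obtain ⟨m, hm, hcoer⟩ := exists_coercive T hpos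
  have hφeq : φ = fun x => gapObj F c T x (ωhat x) := by
    funext x
    refine (hφ x).unique ⟨⟨ωhat x, hωhatK x, rfl⟩, ?_⟩
    rintro _ ⟨w, hw, rfl⟩
    exact hωhatmax x w hw
  rw [hφeq]
  exact hasGradientAt_gap hKcv F (hF.differentiable one_ne_zero) hc hm T hT hcoer ωhat hωhatK
    hωhatmax l
end

section
/- Let F : ℝ^{n_x} × ℝ^{n_u} × ℝ^{n_λ} → ℝ^{n_λ} be continuous and fix (x, u) ∈ ℝ^{n_x} × ℝ^{n_u}. Then λ ∈ K satisfies ⟨F(x, u, λ), ω − λ⟩ ≥ 0 for all ω ∈ K if and only if there exists η ∈ ℝ^{n_λ} such that F(x, u, λ) − η = 0, g(λ) ≥ 0 (componentwise), and φ^c(λ, η) ≤ 0. -/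
/-!
If `l` solves the variational inequality for `η = F x u l`, every value in the maximum defining
`φ l η` is a nonpositive linear term minus a nonnegative quadratic one, so `φ l η ≤ 0`.
Conversely, testing the maximum at `l + t • (ω - l) ∈ K` gives
`0 ≤ η ⬝ᵥ (ω - l) + (c / 2) * t * q` with `q` independent of `t`; a small `t` rules out
`η ⬝ᵥ (ω - l) < 0`.
-/

open Matrix

/-- For fixed (x, u), λ ∈ K satisfies ⟨F(x,u,λ), ω − λ⟩ ≥ 0 for all ω ∈ K iff there
exists η with F(x,u,λ) − η = 0, g(λ) ≥ 0 componentwise, and φ^c(λ, η) ≤ 0. -/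
theorem stmt_8 (nx nu nl m : ℕ) (hnl : 1 ≤ nl) (hm : 1 ≤ m)
    (g : (Fin nl → ℝ) → (Fin m → ℝ)) (hg : Continuous g)
    (K : Set (Fin nl → ℝ)) (hKdef : K = {l | ∀ i, 0 ≤ g l i})
    (hKne : K.Nonempty) (hKcl : IsClosed K) (hKcv : Convex ℝ K)
    (c : ℝ) (hc : 0 < c) (A : Matrix (Fin nl) (Fin nl) ℝ) (hA : A.PosDef)
    (F : (Fin nx → ℝ) → (Fin nu → ℝ) → (Fin nl → ℝ) → (Fin nl → ℝ))
    (hF : Continuous fun p : (Fin nx → ℝ) × (Fin nu → ℝ) × (Fin nl → ℝ) =>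
      F p.1 p.2.1 p.2.2)
    (x : Fin nx → ℝ) (u : Fin nu → ℝ)
    (φ : (Fin nl → ℝ) → (Fin nl → ℝ) → ℝ)
    (hφ : ∀ l η, IsGreatest
      ((fun ω => η ⬝ᵥ (l - ω) - c / 2 * ((l - ω) ⬝ᵥ A.mulVec (l - ω))) '' K) (φ l η)) :
    ∀ l, ((l ∈ K ∧ ∀ ω ∈ K, 0 ≤ F x u l ⬝ᵥ (ω - l)) ↔
      (∃ η, F x u l - η = 0 ∧ (∀ i, 0 ≤ g l i) ∧ φ l η ≤ 0)) := by
  intro l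
  have psd : ∀ v : Fin nl → ℝ, 0 ≤ v ⬝ᵥ A.mulVec v := fun v => by
    simpa using hA.posSemidef.dotProduct_mulVec_nonneg v
  constructor
  · rintro ⟨hl, h⟩
    refine ⟨F x u l, sub_self _, by simpa [hKdef] using hl, ?_⟩
    obtain ⟨ω, hω, he⟩ := (hφ l (F x u l)).1
    rw [← he]
    have h1 := h ω hω
    rw [← neg_sub l ω, dotProduct_neg] at h1
    have h2 := mul_nonneg (half_pos hc).le (psd (l - ω))
    simp only
    linarith
  · rintro ⟨η, hη, hgl, hle⟩
    obtain rfl : F x u l = η := sub_eq_zero.1 hη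
    have hl : l ∈ K := by rw [hKdef]; exact hgl
    refine ⟨hl, fun ω hω => ?_⟩
    by_contra! ha
    set a := F x u l ⬝ᵥ (ω - l) with ha_def
    set q := (ω - l) ⬝ᵥ A.mulVec (ω - l) with hq_def
    have hq : 0 ≤ c * q := mul_nonneg hc.le (psd _)
    have hd : 0 < c * q - a := by linarith
    -- This step size lies in `(0, 1]` and satisfies `t * c * q < -a`.
    obtain ⟨t, ht⟩ : ∃ t, t = -a / (c * q - a) := ⟨_, rfl⟩
    have ht0 : 0 < t := ht ▸ div_pos (neg_pos.2 ha) hd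
    have ht1 : t ≤ 1 := by rw [ht, div_le_one hd]; linarith
    have hta : t * (c * q - a) = -a := by rw [ht, div_mul_cancel₀ _ hd.ne']
    have hval := (hφ l (F x u l)).2
      ⟨_, hKcv.add_smul_sub_mem hl hω ⟨ht0.le, ht1⟩, rfl⟩
    have e : l - (l + t • (ω - l)) = (-t) • (ω - l) := by
      rw [neg_smul]; abel
    simp only [e, mulVec_smul, dotProduct_smul, smul_dotProduct, smul_eq_mul,
      ← ha_def, ← hq_def] at hval
    have hprod : t * (a + c / 2 * (t * q)) ≥ 0 := by linarith
    have h3 := nonneg_of_mul_nonneg_right hprod ht0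
    have h4 := mul_neg_of_pos_of_neg ht0 ha
    linarith
end

section
/- The function φ^c(λ, η) is (jointly) differentiable at every (λ, η) ∈ ℝ^n × ℝ^n, with derivative given by the linear map (Δλ, Δη) ↦ ⟨η − cA(λ − ω̂), Δλ⟩ + ⟨λ − ω̂, Δη⟩, where ω̂ = ω̂(λ, η) ∈ K is the unique maximizer over ω ∈ K of ⟨η, λ − ω⟩ − (c/2)⟨λ − ω, A(λ − ω)⟩; in particular ∇_λ φ^c(λ, η) = η − cA(λ − ω̂) and ∇_η φ^c(λ, η) = λ − ω̂. -/
/-!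
The proof compares `φ` with the objective `f (l, η, ω) = ⟪η, l - ω⟫ - c / 2 * ⟪l - ω, A (l - ω)⟫`
at fixed `ω`. Write `ω̂`, `ω'` for the maximizers at `(l, η)` and at `(l + Δl, η + Δη)`, and let
`q = ⟪Δη, Δl⟫ - c / 2 * ⟪Δl, A Δl⟫`. Testing the second problem with `ω̂` bounds the first order
remainder of `φ` below by `q`; testing the first problem with `ω'` bounds it above by
`q + ⟪c A Δl - Δη, ω' - ω̂⟫`. Adding the variational inequalities for `ω̂` and `ω'`
(`variational_ineq`) gives `c ⟪d, A d⟫ ≤ ⟪c A Δl - Δη, d⟫` for `d = ω' - ω̂`. With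
`u = c Δl - A⁻¹ Δη`, so that `A u = c A Δl - Δη`, the Cauchy-Schwarz inequality for the form of `A`
bounds the extra term by `⟪u, A u⟫ / c` (`inner_le_of_monotone`). Thus the remainder is
`O(‖(Δl, Δη)‖ ^ 2)`.
-/

open RealInnerProductSpace

section GapFunction

variable {E : Type*} [NormedAddCommGroup E] [InnerProductSpace ℝ E]

/-- First-order optimality: a maximizer `w` of the concave quadratic objective over a convex set
satisfies the variational inequality with the negative gradient `η - c T (l - w)`. -/
lemma variational_ineq {K : Set E} (hK : Convex ℝ K) {c : ℝ} {T : E →L[ℝ] E}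
    (hsymm : ∀ x y, ⟪x, T y⟫ = ⟪T x, y⟫) {l η w : E} (hw : w ∈ K)
    (hmax : ∀ ω ∈ K, ⟪η, l - ω⟫ - c / 2 * ⟪l - ω, T (l - ω)⟫ ≤
      ⟪η, l - w⟫ - c / 2 * ⟪l - w, T (l - w)⟫) {z : E} (hz : z ∈ K) :
    0 ≤ ⟪η - c • T (l - w), z - w⟫ := by
  have key : ∀ t : ℝ, 0 < t → t ≤ 1 →
      -⟪η - c • T (l - w), z - w⟫ ≤ t * (c / 2 * ⟪z - w, T (z - w)⟫) := by
    intro t ht ht1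
    have h := hmax (w + t • (z - w)) (hK.add_smul_sub_mem hw hz ⟨ht.le, ht1⟩)
    have e : l - (w + t • (z - w)) = (l - w) - t • (z - w) := by abel
    rw [e] at h
    generalize z - w = d at *
    generalize l - w = v at *
    have s1 : ⟪d, T v⟫ = ⟪T v, d⟫ := real_inner_comm _ _
    have s2 : ⟪v, T d⟫ = ⟪T v, d⟫ := hsymm v d
    simp only [map_sub, map_smul, inner_sub_left, inner_sub_right, real_inner_smul_left,
      real_inner_smul_right, s1, s2] at h ⊢
    refine le_of_mul_le_mul_left ?_ ht
    linarith
  by_contra! hneg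
  set a := -⟪η - c • T (l - w), z - w⟫ with ha
  set b := c / 2 * ⟪z - w, T (z - w)⟫
  have ha0 : 0 < a := by linarith
  have hab : a ≤ b := by simpa using key 1 one_pos le_rfl
  have hb0 : 0 < b := by linarith
  have h := key (a / (2 * b)) (by positivity) (by rw [div_le_one (by positivity)]; linarith)
  have e : a / (2 * b) * b = a / 2 := by field_simp
  rw [e] at h
  linarith

/-- Cauchy-Schwarz step: if `d` solves the perturbed inequality `c ⟪d, T d⟫ ≤ ⟪T u, d⟫`, then
`⟪T u, d⟫` is controlled by the form of `T` at `u` alone. -/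
lemma inner_le_of_monotone {c : ℝ} (hc : 0 < c) {T : E →L[ℝ] E}
    (hsymm : ∀ x y, ⟪x, T y⟫ = ⟪T x, y⟫) (hpos : ∀ x, 0 ≤ ⟪x, T x⟫) {u d : E}
    (h : c * ⟪d, T d⟫ ≤ ⟪T u, d⟫) : ⟪T u, d⟫ ≤ ⟪u, T u⟫ / c := by
  have h1 := hpos (u - c • d)
  have s1 : ⟪d, T u⟫ = ⟪T u, d⟫ := real_inner_comm _ _
  have s2 : ⟪u, T d⟫ = ⟪T u, d⟫ := hsymm u d
  simp only [map_sub, map_smul, inner_sub_left, inner_sub_right, real_inner_smul_left,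
    real_inner_smul_right, s1, s2] at h1
  have h2 := mul_le_mul_of_nonneg_left h hc.le
  rw [le_div_iff₀ hc]
  linarith

/-- Differentiability of the regularized gap function for a symmetric positive operator `T` with a
bounded right inverse `S`. -/
lemma hasFDerivAt_gap {K : Set E} (hK : Convex ℝ K) {c : ℝ} (hc : 0 < c) {T S : E →L[ℝ] E}
    (hsymm : ∀ x y, ⟪x, T y⟫ = ⟪T x, y⟫) (hpos : ∀ x, 0 ≤ ⟪x, T x⟫)
    (hTS : ∀ x, T (S x) = x) (w : E → E → E) (hw : ∀ l η, w l η ∈ K)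
    (hmax : ∀ l η, ∀ ω ∈ K, ⟪η, l - ω⟫ - c / 2 * ⟪l - ω, T (l - ω)⟫ ≤
      ⟪η, l - w l η⟫ - c / 2 * ⟪l - w l η, T (l - w l η)⟫) (l η : E) :
    HasFDerivAt (fun p : E × E => ⟪p.2, p.1 - w p.1 p.2⟫ -
        c / 2 * ⟪p.1 - w p.1 p.2, T (p.1 - w p.1 p.2)⟫)
      ((innerSL ℝ (η - c • T (l - w l η))).comp (ContinuousLinearMap.fst ℝ E E) +
        (innerSL ℝ (l - w l η)).comp (ContinuousLinearMap.snd ℝ E E)) (l, η) := by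
  rw [hasFDerivAt_iff_isLittleO_nhds_zero]
  set C : ℝ := 1 + c / 2 * ‖T‖ + ‖T‖ * (c + ‖S‖) ^ 2 / c
  refine Asymptotics.IsBigO.trans_isLittleO (g := fun h : E × E => ‖h‖ ^ 2) ?_ ?_
  swap
  · exact Asymptotics.isLittleO_norm_pow_id one_lt_two
  refine Asymptotics.IsBigO.of_bound C (Filter.Eventually.of_forall ?_)
  rintro ⟨x, y⟩
  have hx : ‖x‖ ≤ ‖(x, y)‖ := norm_fst_le (x, y)
  have hy : ‖y‖ ≤ ‖(x, y)‖ := norm_snd_le (x, y)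
  generalize ‖(x, y)‖ = N at hx hy
  have hN : 0 ≤ N := (norm_nonneg x).trans hx
  have hform : ∀ v : E, ∀ M : ℝ, ‖v‖ ≤ M → ⟪v, T v⟫ ≤ ‖T‖ * M ^ 2 := by
    intro v M hM
    calc ⟪v, T v⟫ ≤ ‖v‖ * ‖T v‖ := real_inner_le_norm _ _
      _ ≤ ‖v‖ * (‖T‖ * ‖v‖) := by gcongr; exact T.le_opNorm v
      _ = ‖T‖ * ‖v‖ ^ 2 := by ring
      _ ≤ ‖T‖ * M ^ 2 := by gcongr
  have hq : |⟪y, x⟫| ≤ N ^ 2 := by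
    calc |⟪y, x⟫| ≤ ‖y‖ * ‖x‖ := abs_real_inner_le_norm _ _
      _ ≤ N * N := by gcongr
      _ = N ^ 2 := by ring
  have hxx := hform x N hx
  have hxx0 := hpos x
  set u : E := c • x - S y with hu
  have hun : ‖u‖ ≤ (c + ‖S‖) * N := by
    calc ‖u‖ ≤ ‖c • x‖ + ‖S y‖ := norm_sub_le _ _
      _ ≤ c * ‖x‖ + ‖S‖ * ‖y‖ := by
        gcongr
        · rw [norm_smul, Real.norm_of_nonneg hc.le]
        · exact S.le_opNorm y
      _ ≤ c * N + ‖S‖ * N := by gcongr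
      _ = _ := by ring
  have huu : ⟪u, T u⟫ / c ≤ ‖T‖ * (c + ‖S‖) ^ 2 / c * N ^ 2 := by
    calc ⟪u, T u⟫ / c ≤ ‖T‖ * ((c + ‖S‖) * N) ^ 2 / c := by gcongr; exact hform u _ hun
      _ = _ := by ring
  have huu0 : 0 ≤ ⟪u, T u⟫ / c := div_nonneg (hpos u) hc.le
  have hTu : T u = c • T x - y := by simp [hu, hTS]
  set w₀ := w l η
  set w₁ := w (l + x) (η + y) with hw₁
  have hw₀K : w₀ ∈ K := hw l η
  have hw₁K : w₁ ∈ K := hw (l + x) (η + y)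
  have vi₀ := variational_ineq hK hsymm hw₀K (hmax l η) hw₁K
  have vi₁ := variational_ineq hK hsymm hw₁K (hmax (l + x) (η + y)) hw₀K
  have lower := hmax (l + x) (η + y) w₀ hw₀K
  have upper := hmax l η w₁ hw₁K
  rw [← hw₁] at lower
  -- Everything is expressed through `v = l - w₀` and `d = w₁ - w₀`.
  obtain ⟨v, hv⟩ : ∃ v, v = l - w₀ := ⟨_, rfl⟩
  obtain ⟨d, hd⟩ : ∃ d, d = w₁ - w₀ := ⟨_, rfl⟩
  have e1 : l - w₁ = v - d := by rw [hv, hd]; abel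
  have e2 : l + x - w₁ = v + x - d := by rw [hv, hd]; abel
  have e3 : l + x - w₀ = v + x := by rw [hv]; abel
  have e4 : w₀ - w₁ = -d := by rw [hd]; abel
  change 0 ≤ ⟪η - c • T (l - w₀), w₁ - w₀⟫ at vi₀
  change _ ≤ ⟪η, l - w₀⟫ - c / 2 * ⟪l - w₀, T (l - w₀)⟫ at upper
  rw [← hv, ← hd] at vi₀
  rw [e2, e4] at vi₁
  rw [e3, e2] at lower
  rw [e1, ← hv] at upper
  have hmono : c * ⟪d, T d⟫ ≤ ⟪T u, d⟫ := by
    have s : ⟪d, T d⟫ = ⟪T d, d⟫ := hsymm d d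
    simp only [hTu, map_sub, map_add, smul_sub, smul_add, inner_sub_left, inner_add_left,
      inner_neg_right, real_inner_smul_left, s] at vi₀ vi₁ ⊢
    linarith
  have hcs := inner_le_of_monotone hc hsymm hpos hmono
  have hTud : ⟪T u, d⟫ = c * ⟪T x, d⟫ - ⟪y, d⟫ := by
    rw [hTu, inner_sub_left, real_inner_smul_left]
  simp only [Prod.mk_add_mk, add_apply, ContinuousLinearMap.comp_apply,
    ContinuousLinearMap.coe_fst', ContinuousLinearMap.coe_snd', innerSL_apply_apply]
  rw [← hw₁, e2]
  change |_ - (⟪η, l - w₀⟫ - c / 2 * ⟪l - w₀, T (l - w₀)⟫) -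
    (⟪η - c • T (l - w₀), x⟫ + ⟪l - w₀, y⟫)| ≤ C * |N ^ 2|
  rw [← hv, abs_of_nonneg (sq_nonneg N)]
  have hC : C * N ^ 2 = N ^ 2 + c / 2 * (‖T‖ * N ^ 2) +
      ‖T‖ * (c + ‖S‖) ^ 2 / c * N ^ 2 := by ring
  rw [hC]
  have hcxx := mul_le_mul_of_nonneg_left hxx (half_pos hc).le
  have hcxx0 := mul_nonneg (half_pos hc).le hxx0
  have hq' := abs_le.mp hq
  have a1 : ⟪v, T x⟫ = ⟪T v, x⟫ := hsymm v x
  have a2 : ⟪x, T v⟫ = ⟪T v, x⟫ := real_inner_comm _ _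
  have a3 : ⟪v, T d⟫ = ⟪T v, d⟫ := hsymm v d
  have a4 : ⟪d, T v⟫ = ⟪T v, d⟫ := real_inner_comm _ _
  have a5 : ⟪x, T d⟫ = ⟪T x, d⟫ := hsymm x d
  have a6 : ⟪d, T x⟫ = ⟪T x, d⟫ := real_inner_comm _ _
  have a7 : ⟪v, y⟫ = ⟪y, v⟫ := real_inner_comm _ _
  simp only [map_sub, map_add, inner_sub_left, inner_add_left, inner_sub_right, inner_add_right,
    real_inner_smul_left, a1, a2, a3, a4, a5, a6, a7] at lower upper ⊢
  rw [abs_le]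
  constructor <;> linarith

end GapFunction

/-- φ^c(λ, η) is jointly differentiable, with derivative
(Δλ, Δη) ↦ ⟨η − cA(λ − ω̂), Δλ⟩ + ⟨λ − ω̂, Δη⟩ at every (λ, η); in particular
∇_λ φ^c = η − cA(λ − ω̂) and ∇_η φ^c = λ − ω̂. -/
theorem stmt_9 (n : ℕ) (hn : 1 ≤ n) (K : Set (EuclideanSpace ℝ (Fin n)))
    (hKne : K.Nonempty) (hKcl : IsClosed K) (hKcv : Convex ℝ K)
    (c : ℝ) (hc : 0 < c) (A : Matrix (Fin n) (Fin n) ℝ) (hA : A.PosDef)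
    (φ : EuclideanSpace ℝ (Fin n) → EuclideanSpace ℝ (Fin n) → ℝ)
    (ωhat : EuclideanSpace ℝ (Fin n) → EuclideanSpace ℝ (Fin n) → EuclideanSpace ℝ (Fin n))
    (hωhatK : ∀ l η, ωhat l η ∈ K)
    (hωhatmax : ∀ l η, ∀ ω ∈ K,
      ⟪η, l - ω⟫ - c / 2 * ⟪l - ω, Matrix.toEuclideanLin A (l - ω)⟫ ≤
        ⟪η, l - ωhat l η⟫ -
          c / 2 * ⟪l - ωhat l η, Matrix.toEuclideanLin A (l - ωhat l η)⟫)
    (hφ : ∀ l η, IsGreatest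
      ((fun ω => ⟪η, l - ω⟫ - c / 2 * ⟪l - ω, Matrix.toEuclideanLin A (l - ω)⟫) '' K)
      (φ l η)) :
    ∀ l η, HasFDerivAt
      (fun p : EuclideanSpace ℝ (Fin n) × EuclideanSpace ℝ (Fin n) => φ p.1 p.2)
      ((innerSL ℝ (η - c • Matrix.toEuclideanLin A (l - ωhat l η))).comp
          (ContinuousLinearMap.fst ℝ (EuclideanSpace ℝ (Fin n)) (EuclideanSpace ℝ (Fin n))) +
        (innerSL ℝ (l - ωhat l η)).comp
          (ContinuousLinearMap.snd ℝ (EuclideanSpace ℝ (Fin n)) (EuclideanSpace ℝ (Fin n))))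
      (l, η) := by
  intro l η
  have hval : ∀ a b, φ a b = ⟪b, a - ωhat a b⟫ -
      c / 2 * ⟪a - ωhat a b, Matrix.toEuclideanLin A (a - ωhat a b)⟫ := fun a b =>
    (hφ a b).unique ⟨⟨ωhat a b, hωhatK a b, rfl⟩, by
      rintro _ ⟨ω, hω, rfl⟩
      exact hωhatmax a b ω hω⟩
  have hsymm : (Matrix.toEuclideanLin A).IsSymmetric :=
    Matrix.isSymmetric_toEuclideanLin_iff.mpr hA.isHermitian
  have hpos : ∀ x, 0 ≤ ⟪x, Matrix.toEuclideanLin A x⟫ := fun x =>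
    (Matrix.isPositive_toEuclideanLin_iff.mpr hA.posSemidef).re_inner_nonneg_right x
  have hinv : ∀ x, Matrix.toEuclideanLin A (Matrix.toEuclideanLin A⁻¹ x) = x := by
    intro x
    have := hA.isUnit
    rw [Matrix.isUnit_iff_isUnit_det] at this
    ext i
    simp [Matrix.toLpLin_apply, Matrix.mul_nonsing_inv A this]
  simp only [hval]
  exact hasFDerivAt_gap hKcv hc (T := LinearMap.toContinuousLinearMap (Matrix.toEuclideanLin A))
    (S := LinearMap.toContinuousLinearMap (Matrix.toEuclideanLin A⁻¹))
    (fun x y => (hsymm x y).symm) hpos hinv ωhat hωhatK hωhatmax l η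
end

section
/- For every s ≥ 0, the relaxed feasible set satisfies R^c = R^c_1 ∪ R^c_2 ∪ R^c_3, where R^c_1 = {(λ, η) : b_l ≤ λ ≤ b_u, η ≥ c(λ − b_l), η(λ − b_l) − (c/2)(λ − b_l)² ≤ s}, R^c_2 = {(λ, η) : b_l ≤ λ ≤ b_u, |η| ≤ √(2cs), c(λ − b_u) ≤ η ≤ c(λ − b_l)}, and R^c_3 = {(λ, η) : b_l ≤ λ ≤ b_u, η ≤ c(λ − b_u), η(λ − b_u) − (c/2)(λ − b_u)² ≤ s}. -/
/-!
In terms of `t = l - ω`, the objective is the concave parabola `η * t - c / 2 * t ^ 2` with vertex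
`t = η / c`, maximised over `[l - bu, l - bl]`. If the vertex lies to the right (left) of this
interval, the maximum is attained at `ω = bl` (`ω = bu`); otherwise it equals `η ^ 2 / (2 * c)`, and
`η ^ 2 / (2 * c) ≤ s` means `|η| ≤ √(2 * c * s)`.
-/

/-- For every s ≥ 0, the relaxed feasible set R^c = {(λ, η) : b_l ≤ λ ≤ b_u, φ^c(λ, η) ≤ s}
equals R^c_1 ∪ R^c_2 ∪ R^c_3. -/
theorem stmt_15 (bl bu : ℝ) (hb : bl < bu) (c : ℝ) (hc : 0 < c)
    (φ : ℝ → ℝ → ℝ)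
    (hφ : ∀ l η, IsGreatest
      ((fun ω => η * (l - ω) - c / 2 * (l - ω) ^ 2) '' Set.Icc bl bu) (φ l η))
    (s : ℝ) (hs : 0 ≤ s) :
    {p : ℝ × ℝ | (bl ≤ p.1 ∧ p.1 ≤ bu) ∧ φ p.1 p.2 ≤ s} =
      {p : ℝ × ℝ | (bl ≤ p.1 ∧ p.1 ≤ bu) ∧ c * (p.1 - bl) ≤ p.2 ∧
          p.2 * (p.1 - bl) - c / 2 * (p.1 - bl) ^ 2 ≤ s} ∪
        {p : ℝ × ℝ | (bl ≤ p.1 ∧ p.1 ≤ bu) ∧ |p.2| ≤ Real.sqrt (2 * c * s) ∧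
          c * (p.1 - bu) ≤ p.2 ∧ p.2 ≤ c * (p.1 - bl)} ∪
        {p : ℝ × ℝ | (bl ≤ p.1 ∧ p.1 ≤ bu) ∧ p.2 ≤ c * (p.1 - bu) ∧
          p.2 * (p.1 - bu) - c / 2 * (p.1 - bu) ^ 2 ≤ s} := by
  -- Since `φ` is a maximum, `φ l η ≤ s` bounds the objective at every `ω ∈ [bl, bu]`.
  have key : ∀ l η, φ l η ≤ s ↔
      ∀ ω, bl ≤ ω → ω ≤ bu → η * (l - ω) - c / 2 * (l - ω) ^ 2 ≤ s := by
    intro l η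
    rw [isLUB_le_iff (hφ l η).isLUB]
    simp only [mem_upperBounds, Set.forall_mem_image, Set.mem_Icc, and_imp]
  have hsqrt : ∀ η : ℝ, |η| ≤ Real.sqrt (2 * c * s) ↔ η ^ 2 ≤ 2 * c * s := by
    intro η
    rw [Real.le_sqrt (abs_nonneg η) (by positivity), sq_abs]
  ext ⟨l, η⟩
  simp only [Set.mem_union, Set.mem_ofPred_eq, key, hsqrt]
  constructor
  · rintro ⟨hl, h⟩
    rcases le_total (c * (l - bl)) η with h1 | h1
    · exact Or.inl (Or.inl ⟨hl, h1, h bl le_rfl hb.le⟩)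
    rcases le_total η (c * (l - bu)) with h2 | h2
    · exact Or.inr ⟨hl, h2, h bu hb.le le_rfl⟩
    refine Or.inl (Or.inr ⟨hl, ?_, h2, h1⟩)
    -- The vertex of the parabola is feasible.
    have hlow : η / c ≤ l - bl := by rw [div_le_iff₀ hc]; linarith
    have hupp : l - bu ≤ η / c := by rw [le_div_iff₀ hc]; linarith
    have hv := h (l - η / c) (by linarith) (by linarith)
    have hval : η * (l - (l - η / c)) - c / 2 * (l - (l - η / c)) ^ 2 = η ^ 2 / (2 * c) := by
      field_simp
      ring
    rw [hval, div_le_iff₀ (by positivity)] at hv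
    linarith
  · rintro ((⟨hl, h1, h⟩ | ⟨hl, h, -, -⟩) | ⟨hl, h1, h⟩)
    · refine ⟨hl, fun ω hω _ => ?_⟩
      -- The value at `bl` exceeds the value at `ω` by
      -- `(ω - bl) * (η - c * (l - bl)) + c / 2 * (ω - bl) ^ 2`.
      nlinarith [mul_nonneg (sub_nonneg.2 hω) (sub_nonneg.2 h1),
        mul_nonneg hc.le (sq_nonneg (ω - bl))]
    · refine ⟨hl, fun ω _ _ => ?_⟩
      -- Completing the square bounds the objective by `η ^ 2 / (2 * c)`.
      have hsq : 2 * c * (η * (l - ω) - c / 2 * (l - ω) ^ 2) ≤ 2 * c * s := by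
        nlinarith [sq_nonneg (η - c * (l - ω))]
      exact le_of_mul_le_mul_left hsq (by positivity)
    · refine ⟨hl, fun ω _ hω => ?_⟩
      -- The value at `bu` exceeds the value at `ω` by
      -- `(bu - ω) * (c * (l - bu) - η) + c / 2 * (bu - ω) ^ 2`.
      nlinarith [mul_nonneg (sub_nonneg.2 hω) (sub_nonneg.2 h1),
        mul_nonneg hc.le (sq_nonneg (bu - ω))]
end

section
/- For every s ≥ 0, the relaxed feasible set R^c = {(λ, η) ∈ ℝ² : b_l ≤ λ ≤ b_u and φ^c(λ, η) ≤ s} is a path-connected subset of ℝ². -/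
/-!
For fixed `λ` the function `η ↦ φ λ η` is a maximum of affine functions, and at `η = 0` every one
of these is nonpositive, so `φ λ 0 ≤ 0 ≤ s`. Hence each point `(λ, η)` of the set is joined inside
the set to `(λ, 0)` by a vertical segment, and the horizontal segment `[bl, bu] × {0}` lies in
the set.
-/

/-- For every s ≥ 0, the relaxed feasible set
R^c = {(λ, η) : b_l ≤ λ ≤ b_u, φ^c(λ, η) ≤ s} is path-connected. -/
theorem stmt_17 (bl bu : ℝ) (hb : bl < bu) (c : ℝ) (hc : 0 < c)
    (φ : ℝ → ℝ → ℝ)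
    (hφ : ∀ l η, IsGreatest
      ((fun ω => η * (l - ω) - c / 2 * (l - ω) ^ 2) '' Set.Icc bl bu) (φ l η))
    (s : ℝ) (hs : 0 ≤ s) :
    IsPathConnected {p : ℝ × ℝ | (bl ≤ p.1 ∧ p.1 ≤ bu) ∧ φ p.1 p.2 ≤ s} := by
  have key : ∀ l η, φ l η ≤ s ↔
      ∀ ω ∈ Set.Icc bl bu, η * (l - ω) - c / 2 * (l - ω) ^ 2 ≤ s := fun l η => by
    rw [isLUB_le_iff (hφ l η).isLUB, mem_upperBounds, Set.forall_mem_image]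
  have zero_mem : ∀ l, φ l 0 ≤ s := fun l => (key l 0).2 fun ω _ => by
    have : 0 ≤ c / 2 * (l - ω) ^ 2 := by positivity
    linarith
  refine ⟨(bl, 0), ⟨⟨le_rfl, hb.le⟩, zero_mem bl⟩, ?_⟩
  rintro ⟨l, η⟩ ⟨⟨h1, h2⟩, h3⟩
  refine JoinedIn.trans (y := (l, 0)) (JoinedIn.of_segment_subset ?_)
    (JoinedIn.of_segment_subset ?_)
  · rintro _ ⟨a, b, ha, hb', hab, rfl⟩
    obtain rfl : a = 1 - b := by linarith
    simp only [Set.mem_ofPred_eq, Prod.fst_add, Prod.snd_add, Prod.smul_fst, Prod.smul_snd,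
      smul_eq_mul, mul_zero, add_zero]
    exact ⟨⟨by nlinarith, by nlinarith⟩, zero_mem _⟩
  · rintro _ ⟨a, b, ha, hb', hab, rfl⟩
    obtain rfl : a = 1 - b := by linarith
    simp only [Set.mem_ofPred_eq, Prod.fst_add, Prod.snd_add, Prod.smul_fst, Prod.smul_snd,
      smul_eq_mul, mul_zero, zero_add]
    rw [show (1 - b) * l + b * l = l by ring]
    refine ⟨⟨h1, h2⟩, (key _ _).2 fun ω hω => ?_⟩
    -- The affine function of `η` is at most `s` at both endpoints, so at their convex combination.
    have e1 := mul_le_mul_of_nonneg_left ((key l η).1 h3 ω hω) hb'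
    have e0 := mul_le_mul_of_nonneg_left ((key l 0).1 (zero_mem l) ω hω) ha
    linarith
end

section
/- For every s > 0, the relaxed feasible set R^c = {(λ, η) ∈ ℝ² : b_l ≤ λ ≤ b_u and φ^c(λ, η) ≤ s} has nonempty interior in ℝ²; in particular, for any λ₀ ∈ (b_l, b_u), the point (λ₀, 0) is an interior point of R^c. -/
/-!
Completing the square in the inner maximization gives `φ l η ≤ η² / (2c)` for all `l`, `η`. Hence
the open set `{(l, η) | bl < l < bu, η² < 2cs}` lies in the relaxed feasible set, and it contains
every point `(l₀, 0)` with `l₀ ∈ (bl, bu)`.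
-/

/-- For every s > 0, the relaxed feasible set
R^c = {(λ, η) : b_l ≤ λ ≤ b_u, φ^c(λ, η) ≤ s} has nonempty interior; in particular,
for any λ₀ ∈ (b_l, b_u), the point (λ₀, 0) is an interior point of R^c. -/
theorem stmt_18 (bl bu : ℝ) (hb : bl < bu) (c : ℝ) (hc : 0 < c)
    (φ : ℝ → ℝ → ℝ)
    (hφ : ∀ l η, IsGreatest
      ((fun ω => η * (l - ω) - c / 2 * (l - ω) ^ 2) '' Set.Icc bl bu) (φ l η))
    (s : ℝ) (hs : 0 < s) :
    (interior {p : ℝ × ℝ | (bl ≤ p.1 ∧ p.1 ≤ bu) ∧ φ p.1 p.2 ≤ s}).Nonempty ∧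
    ∀ l₀ : ℝ, l₀ ∈ Set.Ioo bl bu →
      (l₀, (0 : ℝ)) ∈ interior {p : ℝ × ℝ | (bl ≤ p.1 ∧ p.1 ≤ bu) ∧ φ p.1 p.2 ≤ s} := by
  have key : ∀ l₀ : ℝ, l₀ ∈ Set.Ioo bl bu →
      (l₀, (0 : ℝ)) ∈ interior {p : ℝ × ℝ | (bl ≤ p.1 ∧ p.1 ≤ bu) ∧ φ p.1 p.2 ≤ s} := by
    intro l₀ hl₀
    rw [mem_interior]
    refine ⟨{p : ℝ × ℝ | (bl < p.1 ∧ p.1 < bu) ∧ p.2 ^ 2 < 2 * c * s}, ?_, ?_, ?_⟩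
    · rintro ⟨l, η⟩ ⟨⟨h1, h2⟩, h3⟩
      refine ⟨⟨h1.le, h2.le⟩, ?_⟩
      obtain ⟨ω, -, hω⟩ := (hφ l η).1
      simp only at h3 hω ⊢
      rw [← hω]
      -- Completing the square: `2c (η t - c/2 t²) = η² - (η - c t)²` with `t = l - ω`.
      have hsq : 2 * c * (η * (l - ω) - c / 2 * (l - ω) ^ 2) ≤ 2 * c * s := by
        nlinarith [sq_nonneg (η - c * (l - ω))]
      exact le_of_mul_le_mul_left hsq (by positivity)
    · exact ((isOpen_lt continuous_const continuous_fst).inter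
        (isOpen_lt continuous_fst continuous_const)).inter
        (isOpen_lt (continuous_snd.pow 2) continuous_const)
    · refine ⟨hl₀, ?_⟩
      have : 0 < 2 * c * s := by positivity
      simpa using this
  obtain ⟨l₀, hl₀⟩ := Set.nonempty_Ioo.mpr hb
  exact ⟨⟨_, key l₀ hl₀⟩, key⟩
end
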